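/- For every h ∈ (0, 1/8]: h/20 ≤ ∫_0^∞ 1_{[0,1)}(⌊s⌋_h) · exp( −1/(1 − ⌊s⌋_h²) ) ds − ∫_0^1 exp( −1/(1 − s²) ) ds ≤ 2h, where ⌊s⌋_h := max{ kh : k ∈ ℕ₀, kh ≤ s } and 1_{[0,1)} denotes the indicator function of the interval [0,1). -/

import Mathlib

/-!
Write `F` for the mollifier `1_{[0,1)}(y)·exp(−1/(1−y²))` and `⌊s⌋` for the grid floor of `s`.
The difference of the two integrals is `∫_{(0,∞)} (F(⌊s⌋) − F(s)) ds`, and `F` is nonincreasing on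
`[0,∞)`.

Upper bound: `s − h ≤ ⌊s⌋` gives `F(⌊s⌋) ≤ F(s − h)` for `s ≥ h`, while `F ≤ 1` takes care of
`(0,h]`; by translation invariance the difference is at most `h`.

Lower bound: `u ↦ exp(−1/u)` has derivative `u⁻² exp(−1/u) ≥ e⁻¹ ≥ 3/10` on `[7/16, 1]`, so
`F(a) − F(s) ≥ (3/10)(s² − a²)` for `0 ≤ a ≤ s ≤ 3/4`. Integrating this over the first `N` grid
cells, where `N = ⌊3/(4h)⌋`, gives at least `(3/10) h ((Nh)²/2 − (Nh)h/6)`, and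
`Nh ≥ 3/4 − 1/8 = 5/8` makes this at least `h/20`. The remaining cells contribute nonnegatively.
-/


/-- For `h ∈ (0,∞)` and `t ∈ [0,∞)`, `⌊t⌋_h = max { s ∈ {0, h, 2h, …} : s ≤ t } = h·⌊t/h⌋`
is the largest grid point of the grid `{0, h, 2h, …}` not exceeding `t`. -/
noncomputable def gridFloor (h t : ℝ) : ℝ := h * ⌊t / h⌋₊

open MeasureTheory Set

/-- The one-sided mollifier `1_{[0,1)}(y)·exp(−1/(1−y²))`. -/
noncomputable def moll : ℝ → ℝ :=
  Set.indicator (Set.Ico (0:ℝ) 1) (fun y => Real.exp (-1 / (1 - y ^ 2)))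

lemma moll_of_mem {y : ℝ} (h0 : 0 ≤ y) (h1 : y < 1) :
    moll y = Real.exp (-1 / (1 - y ^ 2)) :=
  Set.indicator_of_mem (show y ∈ Set.Ico (0:ℝ) 1 from ⟨h0, h1⟩) _

lemma moll_nonneg (y : ℝ) : 0 ≤ moll y :=
  Set.indicator_nonneg (fun _ _ => (Real.exp_pos _).le) y

lemma moll_of_neg {y : ℝ} (h0 : y < 0) : moll y = 0 :=
  Set.indicator_of_notMem (fun h => absurd h.1 (not_le.2 h0)) _

lemma moll_of_one_le {y : ℝ} (h1 : 1 ≤ y) : moll y = 0 :=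
  Set.indicator_of_notMem (fun h => absurd h.2 (not_lt.2 h1)) _

lemma moll_le_one (y : ℝ) : moll y ≤ 1 := by
  rcases lt_or_ge y 0 with h0 | h0
  · rw [moll_of_neg h0]; norm_num
  rcases lt_or_ge y 1 with h1 | h1
  · rw [moll_of_mem h0 h1, Real.exp_le_one_iff]
    have : 0 < 1 - y ^ 2 := by nlinarith
    exact div_nonpos_of_nonpos_of_nonneg (by norm_num) this.le
  · rw [moll_of_one_le h1]; norm_num

lemma moll_antitone {a b : ℝ} (ha : 0 ≤ a) (hab : a ≤ b) : moll b ≤ moll a := by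
  rcases lt_or_ge b 1 with h1 | h1
  · rw [moll_of_mem ha (hab.trans_lt h1), moll_of_mem (ha.trans hab) h1, Real.exp_le_exp,
      neg_div, neg_div, neg_le_neg_iff]
    apply one_div_le_one_div_of_le
    · nlinarith
    · nlinarith
  · rw [moll_of_one_le h1]; exact moll_nonneg a

lemma moll_measurable : Measurable moll :=
  Measurable.indicator (by fun_prop) measurableSet_Ico

lemma gridFloor_measurable (h : ℝ) : Measurable (gridFloor h) := by
  unfold gridFloor
  have : Measurable fun t : ℝ => ⌊t / h⌋₊ := Nat.measurable_floor.comp (by fun_prop)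
  fun_prop

lemma gridFloor_nonneg {h : ℝ} (hh : 0 < h) (t : ℝ) : 0 ≤ gridFloor h t := by
  unfold gridFloor; positivity

lemma gridFloor_le {h t : ℝ} (hh : 0 < h) (ht : 0 ≤ t) : gridFloor h t ≤ t := by
  have := Nat.floor_le (show 0 ≤ t / h by positivity)
  rw [le_div_iff₀ hh] at this
  unfold gridFloor; linarith

lemma sub_lt_gridFloor {h : ℝ} (hh : 0 < h) (t : ℝ) : t - h < gridFloor h t := by
  have := Nat.lt_floor_add_one (t / h)
  rw [div_lt_iff₀ hh] at this
  unfold gridFloor; linarith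

lemma gridFloor_eq {h t : ℝ} (hh : 0 < h) (n : ℕ) (h1 : n * h ≤ t) (h2 : t < (n + 1) * h) :
    gridFloor h t = n * h := by
  have : ⌊t / h⌋₊ = n := by
    rw [Nat.floor_eq_iff (div_nonneg (le_trans (by positivity) h1) hh.le)]
    exact ⟨(le_div_iff₀ hh).2 h1, (div_lt_iff₀ hh).2 h2⟩
  unfold gridFloor; rw [this]; ring

lemma moll_integrable : Integrable moll := by
  refine Integrable.mono' (g := (Icc (0:ℝ) 1).indicator fun _ => (1:ℝ)) ?_
    moll_measurable.aestronglyMeasurable (Filter.Eventually.of_forall fun y => ?_)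
  · exact (integrable_indicator_iff measurableSet_Icc).2 (integrableOn_const (by simp))
  · rw [Real.norm_of_nonneg (moll_nonneg y)]
    by_cases hy : y ∈ Icc (0:ℝ) 1
    · rw [indicator_of_mem hy]; exact moll_le_one y
    · rw [indicator_of_notMem hy]
      rcases lt_or_ge y 0 with h0 | h0
      · rw [moll_of_neg h0]
      · exact (moll_of_one_le (not_lt.1 fun h => hy ⟨h0, h.le⟩)).le

lemma moll_grid_le {h s : ℝ} (hh : 0 < h) (hs : 0 < s) :
    moll (gridFloor h s) ≤ (Ioc 0 h).indicator (fun _ => (1:ℝ)) s + moll (s - h) := by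
  rcases le_or_gt s h with h1 | h1
  · rw [indicator_of_mem (show s ∈ Ioc 0 h from ⟨hs, h1⟩)]
    linarith [moll_le_one (gridFloor h s), moll_nonneg (s - h)]
  · rw [indicator_of_notMem (fun hm => absurd hm.2 (not_le.2 h1)), zero_add]
    exact moll_antitone (by linarith) (sub_lt_gridFloor hh s).le

lemma bound_integrable (h : ℝ) :
    Integrable fun s => (Ioc 0 h).indicator (fun _ => (1:ℝ)) s + moll (s - h) := by
  refine Integrable.add ?_ (moll_integrable.comp_sub_right h)
  exact (integrable_indicator_iff measurableSet_Ioc).2 (integrableOn_const (by simp))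

lemma grid_integrableOn {h : ℝ} (hh : 0 < h) :
    IntegrableOn (fun s => moll (gridFloor h s)) (Ioi 0) := by
  refine Integrable.mono' (bound_integrable h).integrableOn
    (moll_measurable.comp (gridFloor_measurable h)).aestronglyMeasurable ?_
  filter_upwards [ae_restrict_mem measurableSet_Ioi] with s hs
  rw [Real.norm_of_nonneg (moll_nonneg _)]
  exact moll_grid_le hh hs

lemma integral_grid_le {h : ℝ} (hh : 0 < h) :
    ∫ s in Ioi (0:ℝ), moll (gridFloor h s) ≤ h + ∫ s, moll s := by
  calc ∫ s in Ioi (0:ℝ), moll (gridFloor h s)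
      ≤ ∫ s in Ioi (0:ℝ), ((Ioc 0 h).indicator (fun _ => (1:ℝ)) s + moll (s - h)) :=
        setIntegral_mono_on (grid_integrableOn hh) (bound_integrable h).integrableOn
          measurableSet_Ioi fun s hs => moll_grid_le hh hs
    _ ≤ ∫ s, ((Ioc 0 h).indicator (fun _ => (1:ℝ)) s + moll (s - h)) :=
        setIntegral_le_integral (bound_integrable h) (Filter.Eventually.of_forall fun s =>
          add_nonneg (indicator_nonneg (fun _ _ => zero_le_one) s) (moll_nonneg _))
    _ = h + ∫ s, moll s := by
        rw [integral_add ((integrable_indicator_iff measurableSet_Ioc).2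
          (integrableOn_const (by simp))) (moll_integrable.comp_sub_right h),
          integral_sub_right_eq_self moll h, integral_indicator measurableSet_Ioc]
        simp [hh.le]

/-- The junk value `exp (-1 / 0) = 1` of the integrand at `s = 1` sits on a null set. -/
lemma integral_moll_Ioi :
    ∫ s in Ioi (0:ℝ), moll s = ∫ s in (0:ℝ)..1, Real.exp (-1 / (1 - s ^ 2)) := by
  rw [intervalIntegral.integral_of_le zero_le_one, integral_Ioc_eq_integral_Ioo]
  unfold moll
  rw [setIntegral_indicator measurableSet_Ico]
  congr 2
  ext x
  simp only [mem_inter_iff, mem_Ioi, mem_Ico, mem_Ioo]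
  constructor
  · rintro ⟨a, b, c⟩; exact ⟨a, c⟩
  · rintro ⟨a, c⟩; exact ⟨a, a.le, c⟩

lemma integral_moll :
    ∫ s, moll s = ∫ s in Ioi (0:ℝ), moll s := by
  rw [← integral_Ici_eq_integral_Ioi]
  exact (setIntegral_eq_integral_of_forall_compl_eq_zero fun x hx =>
    moll_of_neg (not_le.1 hx)).symm

/-- On `[1, 16/7]` the function `v² e^{-v}` is smallest at `v = 1`, with value `e⁻¹ > 3/10`. -/
lemma sq_mul_exp_neg_ge {v : ℝ} (h1 : 1 ≤ v) (h2 : v ≤ 16 / 7) :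
    3 / 10 ≤ Real.exp (-v) * v ^ 2 := by
  -- `exp(-(v-1)) = exp(-(v-1)/4)^4 ≥ (1 - (v-1)/4)^4` reduces the claim to a cubic inequality.
  have e1 : 1 - (v - 1) / 4 ≤ Real.exp (-((v - 1) / 4)) := by
    linarith [Real.add_one_le_exp (-((v - 1) / 4))]
  have e0 : 0 ≤ 1 - (v - 1) / 4 := by linarith
  have e2 : (1 - (v - 1) / 4) ^ 4 ≤ Real.exp (-(v - 1)) := by
    calc _ ≤ Real.exp (-((v - 1) / 4)) ^ 4 := pow_le_pow_left₀ e0 e1 4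
      _ = _ := by rw [← Real.exp_nat_mul]; congr 1; push_cast; ring
  have e3 : 1 ≤ (1 - (v - 1) / 4) ^ 2 * v := by
    have : 0 ≤ (v - 1) * (8 - 7 * (v - 1) + (v - 1) ^ 2) :=
      mul_nonneg (by linarith) (by nlinarith)
    nlinarith
  have e4 : 1 ≤ Real.exp (-(v - 1)) * v ^ 2 := by
    calc (1:ℝ) ≤ ((1 - (v - 1) / 4) ^ 2 * v) ^ 2 := one_le_pow₀ e3
      _ = (1 - (v - 1) / 4) ^ 4 * v ^ 2 := by ring
      _ ≤ _ := by gcongr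
  have e5 : (3:ℝ) / 10 ≤ Real.exp (-1) := by linarith [Real.exp_neg_one_gt_d9]
  have e6 : Real.exp (-v) = Real.exp (-1) * Real.exp (-(v - 1)) := by
    rw [← Real.exp_add]; congr 1; ring
  rw [e6, mul_assoc]
  nlinarith [Real.exp_pos (-1)]

lemma exp_neg_inv_monotone :
    MonotoneOn (fun u : ℝ => Real.exp (-1 / u) - 3 / 10 * u) (Icc (7 / 16) 1) := by
  have hd : ∀ u : ℝ, 0 < u → HasDerivAt (fun u : ℝ => Real.exp (-1 / u) - 3 / 10 * u)
      (Real.exp (-1 / u) * (1 / u ^ 2) - 3 / 10) u := by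
    intro u hu
    have a : HasDerivAt (fun u : ℝ => -1 / u) (1 / u ^ 2) u := by
      have := (hasDerivAt_inv hu.ne').neg
      refine (this.congr_deriv (by field_simp)).congr_of_eventuallyEq ?_
      exact Filter.Eventually.of_forall fun x => by simp [neg_div]
    have b := a.exp.sub ((hasDerivAt_id u).const_mul (3 / 10 : ℝ))
    rw [mul_one] at b
    exact b
  refine monotoneOn_of_deriv_nonneg (convex_Icc _ _) ?_ ?_ ?_
  · intro u hu
    exact (hd u (by linarith [hu.1])).continuousAt.continuousWithinAt
  · intro u hu
    rw [interior_Icc] at hu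
    exact (hd u (by linarith [hu.1])).differentiableAt.differentiableWithinAt
  · intro u hu
    rw [interior_Icc] at hu
    have hu0 : 0 < u := by linarith [hu.1]
    rw [(hd u hu0).deriv]
    have := sq_mul_exp_neg_ge (v := 1 / u) (by rw [le_div_iff₀ hu0]; linarith [hu.2])
      (by rw [div_le_iff₀ hu0]; linarith [hu.1])
    rw [div_pow, one_pow, ← neg_div] at this
    linarith

/-- Quantitative decrease of the mollifier away from its flat end at `1`. -/
lemma moll_sub_ge {a s : ℝ} (ha : 0 ≤ a) (has : a ≤ s) (hs : s ≤ 3 / 4) :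
    3 / 10 * (s ^ 2 - a ^ 2) ≤ moll a - moll s := by
  rw [moll_of_mem ha (by linarith), moll_of_mem (ha.trans has) (by linarith)]
  have := exp_neg_inv_monotone (a := 1 - s ^ 2) (b := 1 - a ^ 2)
    ⟨by nlinarith, by nlinarith⟩ ⟨by nlinarith, by nlinarith⟩ (by nlinarith)
  simp only at this
  linarith

lemma diff_integrableOn {h : ℝ} (hh : 0 < h) :
    IntegrableOn (fun s => moll (gridFloor h s) - moll s) (Ioi 0) :=
  (grid_integrableOn hh).sub moll_integrable.integrableOn

lemma diff_intervalIntegrable {h a b : ℝ} (hh : 0 < h) (ha : 0 ≤ a) (hab : a ≤ b) :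
    IntervalIntegrable (fun s => moll (gridFloor h s) - moll s) volume a b :=
  (intervalIntegrable_iff_integrableOn_Ioc_of_le hab).2
    ((diff_integrableOn hh).mono_set fun _ hx => ha.trans_lt hx.1)

lemma integral_cell_ge {h : ℝ} (hh : 0 < h) (n : ℕ) (hn : ((n:ℝ) + 1) * h ≤ 3 / 4) :
    3 / 10 * (h ^ 3 / 3 + n * h ^ 3) ≤
      ∫ s in (n * h)..((n + 1) * h), (moll (gridFloor h s) - moll s) := by
  have hle : (n:ℝ) * h ≤ (n + 1) * h := by nlinarith
  have hn0 : 0 ≤ (n:ℝ) * h := by positivity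
  have key : ∫ s in (n * h)..((n + 1) * h), (3 / 10 * (s ^ 2 - (n * h) ^ 2)) =
      3 / 10 * (h ^ 3 / 3 + n * h ^ 3) := by
    rw [intervalIntegral.integral_const_mul, intervalIntegral.integral_sub
      (by simp) (by simp), integral_pow, intervalIntegral.integral_const]
    simp only [smul_eq_mul]
    push_cast
    ring
  rw [← key]
  refine intervalIntegral.integral_mono_on_of_le_Ioo hle
    (Continuous.intervalIntegrable (by fun_prop) _ _)
    (diff_intervalIntegrable hh hn0 hle) fun s hs => ?_
  rw [gridFloor_eq hh n hs.1.le hs.2]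
  exact moll_sub_ge hn0 hs.1.le (hs.2.le.trans hn)

lemma integral_cells_ge {h : ℝ} (hh : 0 < h) (n : ℕ) (hn : (n:ℝ) * h ≤ 3 / 4) :
    3 / 10 * h * ((n * h) ^ 2 / 2 - n * h * h / 6) ≤
      ∫ s in (0:ℝ)..(n * h), (moll (gridFloor h s) - moll s) := by
  induction n with
  | zero => simp
  | succ n ih =>
    push_cast at hn ⊢
    have hle : (n:ℝ) * h ≤ (n + 1) * h := by nlinarith
    have hn0 : 0 ≤ (n:ℝ) * h := by positivity
    rw [← intervalIntegral.integral_add_adjacent_intervals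
      (diff_intervalIntegrable hh le_rfl hn0) (diff_intervalIntegrable hh hn0 hle)]
    have := integral_cell_ge hh n hn
    have := ih (hle.trans hn)
    linarith

/-- (numerical integration of the mollifier
`x ↦ 1_{[0,1)}(x)·exp(−1/(1−x²))`): for every `h ∈ (0, 1/8]`,
`h/20 ≤ ∫_0^∞ 1_{[0,1)}(⌊s⌋_h)·exp(−1/(1−⌊s⌋_h²)) ds − ∫_0^1 exp(−1/(1−s²)) ds ≤ 2h`. -/
theorem numerical_integration_of_mollifier
    (h : ℝ) (hh : h ∈ Set.Ioc 0 (1 / 8)) :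
    (h / 20 ≤
      (∫ s in Set.Ioi (0:ℝ),
          Set.indicator (Set.Ico (0:ℝ) 1) (fun y => Real.exp (-1 / (1 - y ^ 2)))
            (gridFloor h s)) -
        (∫ s in (0:ℝ)..1, Real.exp (-1 / (1 - s ^ 2)))) ∧
    ((∫ s in Set.Ioi (0:ℝ),
          Set.indicator (Set.Ico (0:ℝ) 1) (fun y => Real.exp (-1 / (1 - y ^ 2)))
            (gridFloor h s)) -
        (∫ s in (0:ℝ)..1, Real.exp (-1 / (1 - s ^ 2))) ≤ 2 * h) := by
  obtain ⟨h0, h8⟩ := hh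
  change (h / 20 ≤ (∫ s in Ioi (0:ℝ), moll (gridFloor h s)) - _) ∧
    ((∫ s in Ioi (0:ℝ), moll (gridFloor h s)) - _ ≤ 2 * h)
  rw [← integral_moll_Ioi]
  constructor
  · rw [← integral_sub (grid_integrableOn h0) moll_integrable.integrableOn]
    -- The grid point `⌊3/4⌋_h = N h` lies in `[5/8, 3/4]`.
    set N : ℕ := ⌊(3 / 4 : ℝ) / h⌋₊ with hN
    have g1 : (N:ℝ) * h ≤ 3 / 4 := by
      have := gridFloor_le h0 (show (0:ℝ) ≤ 3 / 4 by norm_num)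
      unfold gridFloor at this
      linarith
    have g2 : 5 / 8 ≤ (N:ℝ) * h := by
      have := sub_lt_gridFloor h0 (3 / 4)
      unfold gridFloor at this
      linarith
    have c := integral_cells_ge h0 N g1
    rw [intervalIntegral.integral_of_le (by linarith)] at c
    have d : ∫ s in Ioc (0:ℝ) (N * h), (moll (gridFloor h s) - moll s) ≤
        ∫ s in Ioi (0:ℝ), (moll (gridFloor h s) - moll s) := by
      refine setIntegral_mono_set (diff_integrableOn h0) ?_
        (Filter.Eventually.of_forall fun x hx => hx.1)
      filter_upwards [ae_restrict_mem measurableSet_Ioi] with s hs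
      exact sub_nonneg.2 (moll_antitone (gridFloor_nonneg h0 s) (gridFloor_le h0 (le_of_lt hs)))
    refine le_trans ?_ (c.trans d)
    generalize (N:ℝ) * h = x at g1 g2
    have e : 1 / 6 ≤ x ^ 2 / 2 - x * h / 6 := by nlinarith
    nlinarith
  · have := integral_grid_le h0
    rw [integral_moll] at this
    linarith
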